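/- arXiv:1710.05585 — 7 statements merged into one kernel-verified Lean document; each statement's English description precedes it below -/
import Mathlib

section
/- For every class-K∞ function σ : [0,∞) → [0,∞) there exists a class-K∞ function σ̂ such that σ̂(s) ≤ σ(s) for all s ≥ 0 and the function s ↦ s − σ̂(s) is a class-K function. -/
/-!
The witness is half of the largest `1`-Lipschitz minorant of `σ`,
`g s = min_{0 ≤ t ≤ s} (σ t + (s - t))`. Taking `t = s` gives `g ≤ σ`, and the minimum is attained
by compactness. Attainment makes `g` strictly increasing: if `s < s'` and `t'` is a minimizer for
`s'`, then either `t' ≤ s` and `g s ≤ σ t' + (s - t') < g s'`, or `s < t'` and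
`g s ≤ σ s < σ t' ≤ g s'`. Since `g` is `1`-Lipschitz, `g / 2` has slope at most `1 / 2`, so
`s - g s / 2` is strictly increasing. Finally `g s ≥ min (σ (s / 2)) (s / 2)`, so `g` is unbounded.
-/

open Filter

/-- A class-K function: continuous, strictly increasing on `[0,∞)`, and vanishing at `0`. -/
def ClassK (f : ℝ → ℝ) : Prop :=
  ContinuousOn f (Set.Ici 0) ∧ StrictMonoOn f (Set.Ici 0) ∧ f 0 = 0

/-- A class-K∞ function: a class-K function that is unbounded. -/
def ClassKInf (f : ℝ → ℝ) : Prop :=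
  ClassK f ∧ Tendsto f atTop atTop

/-- The properties of the largest `1`-Lipschitz minorant of a class-K∞ function that are used. -/
theorem exists_lipschitz_minorant (σ : ℝ → ℝ) (hσ : ClassKInf σ) :
    ∃ g : ℝ → ℝ, g 0 = 0 ∧ StrictMonoOn g (Set.Ici 0) ∧ (∀ s ≥ (0:ℝ), g s ≤ σ s) ∧
      (∀ s ≥ (0:ℝ), 0 ≤ g s) ∧ (∀ s ≥ (0:ℝ), ∀ s' ≥ s, g s' ≤ g s + (s' - s)) ∧
      Tendsto g atTop atTop := by
  obtain ⟨⟨hc, hm, h0⟩, ht⟩ := hσ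
  have hpos : ∀ t ≥ (0:ℝ), 0 ≤ σ t := fun t h => by
    have := hm.monotoneOn (Set.mem_Ici.2 le_rfl) (Set.mem_Ici.2 h) h
    rwa [h0] at this
  have hmin : ∀ s : ℝ, ∃ τ : ℝ, 0 ≤ s → (0 ≤ τ ∧ τ ≤ s ∧
      ∀ t, 0 ≤ t → t ≤ s → σ τ + (s - τ) ≤ σ t + (s - t)) := by
    intro s
    by_cases hs : 0 ≤ s
    · obtain ⟨τ, hτ, h⟩ := isCompact_Icc.exists_isMinOn (Set.nonempty_Icc.2 hs)
        (f := fun t => σ t + (s - t))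
        ((hc.mono Set.Icc_subset_Ici_self).add (by fun_prop))
      exact ⟨τ, fun _ => ⟨hτ.1, hτ.2, fun t h1 h2 => h ⟨h1, h2⟩⟩⟩
    · exact ⟨0, fun h => absurd h hs⟩
  choose τ hτ using hmin
  have hle : ∀ s ≥ (0:ℝ), σ (τ s) + (s - τ s) ≤ σ s := fun s hs => by
    have := (hτ s hs).2.2 s hs le_rfl
    linarith
  have hnn : ∀ s ≥ (0:ℝ), 0 ≤ σ (τ s) + (s - τ s) := fun s hs => by
    obtain ⟨h1, h2, -⟩ := hτ s hs
    linarith [hpos _ h1]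
  refine ⟨fun s => σ (τ s) + (s - τ s), ?_, ?_, hle, hnn, ?_, ?_⟩
  · have := hle 0 le_rfl
    exact le_antisymm (by simpa [h0] using this) (hnn 0 le_rfl)
  · intro s hs s' hs' hlt
    obtain ⟨h1, h2, -⟩ := hτ s' hs'
    rcases le_or_gt (τ s') s with h | h
    · have := (hτ s hs).2.2 _ h1 h
      dsimp only
      linarith
    · have h3 := hle s hs
      have h4 := hm hs (Set.mem_Ici.2 h1) h
      dsimp only
      linarith
  · intro s hs s' hss
    obtain ⟨h1, h2, -⟩ := hτ s hs
    have := (hτ s' (le_trans hs hss)).2.2 _ h1 (h2.trans hss)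
    dsimp only
    linarith
  · have hhalf : Tendsto (fun s : ℝ => s / 2) atTop atTop :=
      tendsto_id.atTop_div_const two_pos
    rw [tendsto_atTop]
    intro b
    filter_upwards [(ht.comp hhalf).eventually_ge_atTop b, hhalf.eventually_ge_atTop b,
      eventually_ge_atTop 0] with s hb1 hb2 hs
    obtain ⟨h1, h2, -⟩ := hτ s hs
    rcases le_or_gt (τ s) (s / 2) with h | h
    · linarith [hpos _ h1]
    · have h3 := hm (Set.mem_Ici.2 (by linarith : 0 ≤ s / 2)) (Set.mem_Ici.2 h1) h
      simp only [Function.comp_apply] at hb1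
      linarith

/-- For every class-K∞ function `σ` there exists a class-K∞ function `σ̂` with
`σ̂ s ≤ σ s` for all `s ≥ 0` such that `s ↦ s - σ̂ s` is a class-K function. -/
theorem stmt_0 (σ : ℝ → ℝ) (hσ : ClassKInf σ) :
    ∃ σh : ℝ → ℝ, ClassKInf σh ∧ (∀ s ≥ (0:ℝ), σh s ≤ σ s) ∧
      ClassK (fun s => s - σh s) := by
  obtain ⟨g, g0, gm, gle, gnn, glip, gt⟩ := exists_lipschitz_minorant σ hσ
  have gc : ContinuousOn g (Set.Ici 0) := by
    refine (LipschitzOnWith.of_dist_le_mul (K := 1) fun x hx y hy => ?_).continuousOn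
    rw [Real.dist_eq, Real.dist_eq, NNReal.coe_one, one_mul]
    rcases le_total x y with h | h
    · have h1 := gm.monotoneOn hx hy h
      have h2 := glip x hx y h
      rw [abs_of_nonpos (by linarith), abs_of_nonpos (by linarith)]
      linarith
    · have h1 := gm.monotoneOn hy hx h
      have h2 := glip y hy x h
      rw [abs_of_nonneg (by linarith), abs_of_nonneg (by linarith)]
      linarith
  refine ⟨fun s => g s / 2, ⟨⟨gc.div_const 2, ?_, by simp [g0]⟩, gt.atTop_div_const two_pos⟩,
    ?_, continuousOn_id.sub (gc.div_const 2), ?_, by simp [g0]⟩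
  · intro x hx y hy h
    have := gm hx hy h
    dsimp only
    linarith
  · intro s hs
    have h1 := gle s hs
    have h2 := gnn s hs
    dsimp only
    linarith
  · intro x hx y hy h
    have := glip x hx y h.le
    dsimp only
    linarith
end

section
/- Let Σ = (X,U,f,Y,h) and Σ̂ = (X̂,Û,f̂,Ŷ,ĥ) be transition systems (with Ŷ ⊆ Y and Y a normed vector space), and suppose V is a simulation function from Σ̂ to Σ with associated functions α, σ ∈ K∞, ρ_ext ∈ K∞ ∪ {0} and constant ε ≥ 0. Then there exist a constant φ ≥ 0, a function γ_ext ∈ K∞ ∪ {0}, and a function λ ∈ K∞ with λ(s) < s for all s > 0, such that: for every x ∈ X, x̂ ∈ X̂ and û ∈ Û there exists u ∈ U so that for every x_d ∈ f(x,u) there exists x̂_d ∈ f̂(x̂,û) satisfying α(‖h(x_d) − ĥ(x̂_d)‖) ≤ V(x_d, x̂_d) ≤ max{ λ(V(x,x̂)), γ_ext(‖û‖) + φ }. -/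
/-!
Write `v = V x xh` and `r = ρext ‖uh‖`, so that the successor value is at most `v - σ v + r + ε`.
If `r + ε ≤ σ v / 2`, this is at most `v - σ v / 2`; otherwise `v ≤ σ⁻¹ (2 (r + ε))`, and the
successor value is at most `σ⁻¹ (2 (r + ε)) + r + ε ≤ (σ⁻¹ (4 r) + r) + (σ⁻¹ (4 ε) + ε)`,
which gives `γext = σ⁻¹ ∘ 4ρext + ρext` and `φ = σ⁻¹ (4 ε) + ε`.

The map `s ↦ s - σ s / 2` need not be increasing, so it is replaced by `s ↦ s - τ s / 2`, where
`τ s = inf_{t ≥ 0} (σ t + |s - t|)` is a 1-Lipschitz positive definite minorant of `σ`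
(`ClassKInf.exists_lam`). The inverse of `σ` is given by `ClassKInf.exists_inverse`.
-/

open Filter

/-- The inverse of a class-K∞ function is obtained by extending it to an order automorphism
of `ℝ`, which is then automatically a homeomorphism. -/
theorem ClassKInf.exists_inverse {σ : ℝ → ℝ} (hσ : ClassKInf σ) :
    ∃ κ : ℝ → ℝ, ClassKInf κ ∧ StrictMono κ ∧ Continuous κ ∧ ∀ s, 0 ≤ s → κ (σ s) = s := by
  obtain ⟨⟨hc, hm, h0⟩, ht⟩ := hσ
  have hσnn : ∀ s, 0 ≤ s → 0 ≤ σ s := fun s hs => by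
    rw [← h0]; exact hm.monotoneOn Set.self_mem_Ici hs hs
  let F : ℝ → ℝ := fun x => σ (max x 0) + min x 0
  have hFpos : ∀ x, 0 ≤ x → F x = σ x := fun x hx => by simp [F, hx]
  have hFneg : ∀ x, x ≤ 0 → F x = x := fun x hx => by simp [F, hx, h0]
  have hFc : Continuous F := by
    refine Continuous.add ?_ (by fun_prop)
    exact hc.comp_continuous (by fun_prop) (fun x => le_max_right x 0)
  have hFm : StrictMono F := by
    intro a b hab
    rcases le_total 0 a with ha | ha
    · rw [hFpos a ha, hFpos b (ha.trans hab.le)]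
      exact hm ha (ha.trans hab.le) hab
    · rcases le_total b 0 with hb | hb
      · rwa [hFneg a ha, hFneg b hb]
      · rw [hFneg a ha, hFpos b hb]
        rcases ha.lt_or_eq with ha | rfl
        · exact ha.trans_le (hσnn b hb)
        · rw [← h0]; exact hm Set.self_mem_Ici hb hab
  have hFs : Function.Surjective F := by
    refine hFc.surjective ?_ ?_
    · exact ht.congr' (by filter_upwards [eventually_ge_atTop 0] with x hx using (hFpos x hx).symm)
    · exact tendsto_id.congr'
        (by filter_upwards [eventually_le_atBot 0] with x hx using (hFneg x hx).symm)
  let e := hFm.orderIsoOfSurjective F hFs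
  have hinv : ∀ x, e.symm (F x) = x := fun x => e.symm_apply_apply x
  refine ⟨e.symm, ⟨⟨e.symm.continuous.continuousOn, e.symm.strictMono.strictMonoOn _, ?_⟩,
    e.symm.tendsto_atTop⟩, e.symm.strictMono, e.symm.continuous, fun s hs => ?_⟩
  · have := hinv 0
    rwa [hFneg 0 le_rfl] at this
  · rw [← hFpos s hs, hinv]

/-- A class-K∞ contraction lying above `s ↦ s - σ s / 2`. -/
theorem ClassKInf.exists_lam {σ : ℝ → ℝ} (hσ : ClassKInf σ) :
    ∃ lam : ℝ → ℝ, ClassKInf lam ∧ (∀ s > (0:ℝ), lam s < s) ∧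
      ∀ s, 0 ≤ s → s - σ s / 2 ≤ lam s := by
  obtain ⟨⟨hc, hm, h0⟩, ht⟩ := hσ
  have hσnn : ∀ s, 0 ≤ s → 0 ≤ σ s := fun s hs => by
    rw [← h0]; exact hm.monotoneOn Set.self_mem_Ici hs hs
  let τ : ℝ → ℝ := fun s => ⨅ t : Set.Ici (0:ℝ), (σ t + |s - t|)
  have hbdd : ∀ s : ℝ, BddBelow (Set.range fun t : Set.Ici (0:ℝ) => σ t + |s - t|) := fun s =>
    ⟨0, by rintro _ ⟨t, rfl⟩; exact add_nonneg (hσnn t t.2) (abs_nonneg _)⟩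
  have hle : ∀ s t, 0 ≤ t → τ s ≤ σ t + |s - t| := fun s t h => ciInf_le (hbdd s) ⟨t, h⟩
  have hge : ∀ s c, (∀ t, 0 ≤ t → c ≤ σ t + |s - t|) → c ≤ τ s := fun s c h =>
    le_ciInf fun t => h t t.2
  have hτ0 : τ 0 = 0 := by
    apply le_antisymm
    · simpa [h0] using hle 0 0 le_rfl
    · exact hge 0 0 fun t h => add_nonneg (hσnn t h) (abs_nonneg _)
  have hlip : ∀ s s', τ s ≤ τ s' + |s - s'| := fun s s' => by
    have := hge s' (τ s - |s - s'|) fun t h => by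
      have h1 := hle s t h
      have h2 := abs_sub_le s s' t
      linarith
    linarith
  have hτc : Continuous τ := by
    refine (LipschitzWith.of_le_add fun s s' => ?_ : LipschitzWith 1 τ).continuous
    simpa [Real.dist_eq] using hlip s s'
  have hτpos : ∀ s > (0:ℝ), 0 < τ s := fun s hs => by
    have hs2 : 0 < σ (s / 2) := by
      rw [← h0]; exact hm Set.self_mem_Ici (by simp; positivity) (by positivity)
    refine (lt_min hs2 (half_pos hs)).trans_le (hge s _ fun t h => ?_)
    rcases le_total (s / 2) t with hst | hst
    · have := hm.monotoneOn (by simp; positivity) h hst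
      exact (min_le_left _ _).trans (by linarith [abs_nonneg (s - t)])
    · exact (min_le_right _ _).trans (by linarith [hσnn t h, le_abs_self (s - t)])
  refine ⟨fun s => s - τ s / 2, ⟨⟨by fun_prop, ?_, by simp [hτ0]⟩, ?_⟩, ?_, ?_⟩
  · intro a _ b _ hab
    have := hlip b a
    rw [abs_of_pos (sub_pos.2 hab)] at this
    dsimp only
    linarith
  · -- `τ s ≤ s`, so the function dominates `s / 2`
    refine tendsto_atTop_mono' atTop ?_ (tendsto_id.atTop_div_const (two_pos : (0:ℝ) < 2))
    filter_upwards [eventually_ge_atTop (0:ℝ)] with s hs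
    have := hle s 0 le_rfl
    rw [h0, sub_zero, abs_of_nonneg hs] at this
    simp only [id]
    linarith
  · intro s hs
    linarith [hτpos s hs]
  · intro s hs
    have := hle s s hs
    simp at this
    linarith

/-- Theorem 1 of the paper: if `V` is a simulation function from `Σ̂ = (X̂,Û,f̂,Ŷ,ĥ)` to
`Σ = (X,U,f,Y,h)`, then there exist `φ ≥ 0`, `γ_ext ∈ K∞ ∪ {0}` and `λ ∈ K∞` with
`λ(s) < s` for `s > 0`, such that for all `x, x̂, û` there is `u` so that for every
`x_d ∈ f(x,u)` there exists `x̂_d ∈ f̂(x̂,û)` with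
`α(‖h(x_d) − ĥ(x̂_d)‖) ≤ V(x_d,x̂_d) ≤ max {λ(V(x,x̂)), γ_ext(‖û‖) + φ}`. -/
theorem stmt_1
    {X U Xh : Type*} {EU EY : Type*}
    [NormedAddCommGroup EU] [NormedAddCommGroup EY]
    [TopologicalSpace X] [TopologicalSpace Xh]
    (Uh : Set EU)                      -- the input set Û of the abstraction
    (f : X → U → Set X) (fh : Xh → EU → Set Xh)
    (h : X → EY) (hh : Xh → EY)
    (V : X → Xh → ℝ)
    (hVcont : Continuous fun p : X × Xh => V p.1 p.2)
    (hVnonneg : ∀ x xh, 0 ≤ V x xh)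
    (α σ ρext : ℝ → ℝ) (ε : ℝ)
    (hα : ClassKInf α) (hσ : ClassKInf σ)
    (hρ : ClassKInf ρext ∨ ρext = fun _ => 0) (hε : 0 ≤ ε)
    -- simulation function condition (i)
    (hV1 : ∀ x xh, α ‖h x - hh xh‖ ≤ V x xh)
    -- simulation function condition (ii)
    (hV2 : ∀ x xh, ∀ uh ∈ Uh, ∃ u : U, ∀ xd ∈ f x u, ∃ xhd ∈ fh xh uh,
      V xd xhd - V x xh ≤ -σ (V x xh) + ρext ‖uh‖ + ε) :
    ∃ φ : ℝ, 0 ≤ φ ∧ ∃ γext : ℝ → ℝ, (ClassKInf γext ∨ γext = fun _ => 0) ∧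
      ∃ lam : ℝ → ℝ, ClassKInf lam ∧ (∀ s > (0:ℝ), lam s < s) ∧
        ∀ x xh, ∀ uh ∈ Uh, ∃ u : U, ∀ xd ∈ f x u, ∃ xhd ∈ fh xh uh,
          α ‖h xd - hh xhd‖ ≤ V xd xhd ∧
          V xd xhd ≤ max (lam (V x xh)) (γext ‖uh‖ + φ) := by
  obtain ⟨κ, hκ, hκm, hκc, hκσ⟩ := hσ.exists_inverse
  obtain ⟨lam, hlam, hlt, hlamσ⟩ := hσ.exists_lam
  have hκnn : ∀ s, 0 ≤ s → 0 ≤ κ s := fun s hs => by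
    rw [← hκ.1.2.2]; exact hκm.monotone hs
  have hρnn : ∀ s, 0 ≤ s → 0 ≤ ρext s := fun s hs => by
    rcases hρ with hρ | rfl
    · rw [← hρ.1.2.2]; exact hρ.1.2.1.monotoneOn Set.self_mem_Ici hs hs
    · exact le_rfl
  refine ⟨κ (4 * ε) + ε, add_nonneg (hκnn _ (by positivity)) hε,
    fun s => κ (4 * ρext s) + ρext s, ?_, lam, hlam, hlt, ?_⟩
  · rcases hρ with ⟨⟨hc, hm, h0⟩, ht⟩ | rfl
    · left
      refine ⟨⟨(hκc.comp_continuousOn (continuousOn_const.mul hc)).add hc, ?_,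
        by simp [h0, hκ.1.2.2]⟩, ?_⟩
      · intro a ha b hb hab
        have h1 := hm ha hb hab
        exact add_lt_add (hκm (by linarith)) h1
      · exact (hκ.2.comp (ht.const_mul_atTop (by norm_num))).atTop_add_atTop ht
    · right
      simp [hκ.1.2.2]
  · intro x xh uh huh
    obtain ⟨u, hu⟩ := hV2 x xh uh huh
    refine ⟨u, fun xd hxd => ?_⟩
    obtain ⟨xhd, hxhd, hle⟩ := hu xd hxd
    refine ⟨xhd, hxhd, hV1 _ _, ?_⟩
    have hv := hVnonneg x xh
    have hr := hρnn ‖uh‖ (norm_nonneg _)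
    dsimp only
    generalize ρext ‖uh‖ = r at *
    rcases le_total (r + ε) (σ (V x xh) / 2) with hcase | hcase
    · exact le_max_of_le_left (by linarith [hlamσ _ hv])
    · apply le_max_of_le_right
      have hσv : 0 ≤ σ (V x xh) := by
        rw [← hσ.1.2.2]; exact hσ.1.2.1.monotoneOn Set.self_mem_Ici hv hv
      have h1 : V x xh ≤ κ (2 * (r + ε)) := by
        have := hκm.monotone (show σ (V x xh) ≤ 2 * (r + ε) by linarith)
        rwa [hκσ _ hv] at this
      -- `2 (r + ε) ≤ max (4 r) (4 ε)`, and both values of `κ` are nonnegative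
      have h2 : κ (2 * (r + ε)) ≤ κ (4 * r) + κ (4 * ε) := by
        have h3 := hκnn (4 * r) (by positivity)
        have h4 := hκnn (4 * ε) (by positivity)
        rcases le_total r ε with h | h
        · linarith [hκm.monotone (show 2 * (r + ε) ≤ 4 * ε by linarith)]
        · linarith [hκm.monotone (show 2 * (r + ε) ≤ 4 * r by linarith)]
      linarith
end

section
/- Let ψ, σ̂ be class-K∞ functions such that s ↦ s − ψ(s) is class-K∞ and s ↦ s − σ̂(s) is class-K. Fix r ≥ 0 and set c := σ̂⁻¹(ψ⁻¹(r)). Then for every v with 0 ≤ v ≤ c one has v − σ̂(v) + r ≤ c; that is, the sublevel set {v : v ≤ c} is invariant under the update v ↦ v − σ̂(v) + r. -/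
open Filter

/-- Let `ψ, σ̂` be class-K∞ with `id − ψ` class-K∞ and `id − σ̂` class-K. For `r ≥ 0` set
`c := σ̂⁻¹(ψ⁻¹(r))`. Then the sublevel set `{v : 0 ≤ v ≤ c}` is invariant under
`v ↦ v − σ̂(v) + r`, i.e. `v − σ̂(v) + r ≤ c` for all `0 ≤ v ≤ c`. -/
theorem stmt_2 (ψ σh ψinv σhinv : ℝ → ℝ)
    (hψ : ClassKInf ψ) (hσh : ClassKInf σh)
    (hidψ : ClassKInf (fun s => s - ψ s))
    (hidσh : ClassK (fun s => s - σh s))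
    -- `ψinv` is the inverse of `ψ` on `[0,∞)`
    (hψinv : ∀ s ≥ (0:ℝ), ψ (ψinv s) = s ∧ ψinv (ψ s) = s ∧ 0 ≤ ψinv s)
    -- `σhinv` is the inverse of `σ̂` on `[0,∞)`
    (hσhinv : ∀ s ≥ (0:ℝ), σh (σhinv s) = s ∧ σhinv (σh s) = s ∧ 0 ≤ σhinv s)
    (r : ℝ) (hr : 0 ≤ r) (c : ℝ) (hc : c = σhinv (ψinv r)) :
    ∀ v : ℝ, 0 ≤ v → v ≤ c → v - σh v + r ≤ c := by
  obtain ⟨hψw, -, hw⟩ := hψinv r hr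
  obtain ⟨hσc, -, hc0⟩ := hσhinv (ψinv r) hw
  rw [← hc] at hσc hc0
  intro v hv hvc
  -- `id - σ̂` is increasing, so the worst case is `v = c`, where `σ̂ c = ψ⁻¹ r`.
  have h₁ : v - σh v ≤ c - σh c := hidσh.2.1.monotoneOn hv hc0 hvc
  -- `id - ψ` is nonnegative on `[0,∞)`, so `r = ψ (ψ⁻¹ r) ≤ ψ⁻¹ r`.
  have h₂ : 0 - ψ 0 ≤ ψinv r - ψ (ψinv r) :=
    hidψ.1.2.1.monotoneOn Set.self_mem_Ici hw hw
  have h₃ : ψ 0 = 0 := hψ.1.2.2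
  linarith
end

section
/- Let Σ = (X,U,f,Y,h) and Σ̂ = (X̂,Û,f̂,Ŷ,ĥ) be transition systems with Ŷ ⊆ Y, and let V be a simulation function from Σ̂ to Σ with lower-bound function α ∈ K∞. Let φ ≥ 0, γ_ext ∈ K∞ ∪ {0} and λ ∈ K∞ with λ(s) < s for s > 0 be such that for all x ∈ X, x̂ ∈ X̂, û ∈ Û there exists u ∈ U so that for all x_d ∈ f(x,u) there exists x̂_d ∈ f̂(x̂,û) with V(x_d,x̂_d) ≤ max{λ(V(x,x̂)), γ_ext(‖û‖) + φ}. Assume there is v > 0 with ‖û‖ ≤ v for all û ∈ Û. Then the relation R = {(x,x̂) ∈ X × X̂ : V(x,x̂) ≤ γ_ext(v) + φ} is an ε̂-approximate alternating simulation relation from Σ̂ to Σ with ε̂ = α⁻¹(γ_ext(v) + φ); that is, (i) for every (x,x̂) ∈ R, ‖h(x) − ĥ(x̂)‖ ≤ ε̂, and (ii) for every (x,x̂) ∈ R and every û ∈ Û there exists u ∈ U such that for every x_d ∈ f(x,u) there exists x̂_d ∈ f̂(x̂,û) with (x_d,x̂_d) ∈ R. -/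
/-!
The relation `R` is the sublevel set of `V` at `c = γext v + φ`. Closeness of outputs on `R` follows
by applying the increasing inverse of `α` to `α ‖h x - hh xh‖ ≤ V x xh ≤ c`. For invariance, use the
input `u` given by the max bound: both `lam (V x xh) ≤ V x xh ≤ c` and, by monotonicity of `γext`,
`γext ‖uh‖ + φ ≤ c`, so the successor pair stays in the sublevel set.
-/

open Filter

/-- If `V` is a simulation function from `Σ̂` to `Σ` with lower-bound function `α ∈ K∞`,
satisfying the per-step bound `V(x_d,x̂_d) ≤ max{λ(V(x,x̂)), γ_ext(‖û‖) + φ}`, and all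
inputs of `Σ̂` are bounded by `v`, then
`R = {(x,x̂) : V(x,x̂) ≤ γ_ext(v) + φ}` is an `ε̂`-approximate alternating simulation
relation from `Σ̂` to `Σ` with `ε̂ = α⁻¹(γ_ext(v) + φ)`. -/
theorem stmt_4
    {X U Xh : Type*} {EU EY : Type*}
    [NormedAddCommGroup EU] [NormedAddCommGroup EY]
    [TopologicalSpace X] [TopologicalSpace Xh]
    (Uh : Set EU)
    (f : X → U → Set X) (fh : Xh → EU → Set Xh)
    (h : X → EY) (hh : Xh → EY)
    (V : X → Xh → ℝ)
    (hVcont : Continuous fun p : X × Xh => V p.1 p.2)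
    (hVnonneg : ∀ x xh, 0 ≤ V x xh)
    (α αinv σV ρext : ℝ → ℝ) (εV : ℝ)
    (hα : ClassKInf α) (hσV : ClassKInf σV)
    (hρ : ClassKInf ρext ∨ ρext = fun _ => 0) (hεV : 0 ≤ εV)
    -- `αinv` is the inverse of `α` on `[0,∞)`
    (hαinv : ∀ s ≥ (0:ℝ), α (αinv s) = s ∧ αinv (α s) = s ∧ 0 ≤ αinv s)
    -- simulation function condition (i): lower bound
    (hV1 : ∀ x xh, α ‖h x - hh xh‖ ≤ V x xh)
    -- simulation function condition (ii): decrease condition of Definition 3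
    (hV2 : ∀ x xh, ∀ uh ∈ Uh, ∃ u : U, ∀ xd ∈ f x u, ∃ xhd ∈ fh xh uh,
      V xd xhd - V x xh ≤ -σV (V x xh) + ρext ‖uh‖ + εV)
    (φ : ℝ) (hφ : 0 ≤ φ)
    (γext : ℝ → ℝ) (hγ : ClassKInf γext ∨ γext = fun _ => 0)
    (lam : ℝ → ℝ) (hlam : ClassKInf lam) (hlamlt : ∀ s > (0:ℝ), lam s < s)
    -- per-step max bound
    (hmax : ∀ x xh, ∀ uh ∈ Uh, ∃ u : U, ∀ xd ∈ f x u, ∃ xhd ∈ fh xh uh,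
      V xd xhd ≤ max (lam (V x xh)) (γext ‖uh‖ + φ))
    (v : ℝ) (hv : 0 < v) (hUb : ∀ uh ∈ Uh, ‖uh‖ ≤ v)
    (R : Set (X × Xh)) (hR : R = {p : X × Xh | V p.1 p.2 ≤ γext v + φ})
    (εh : ℝ) (hεh : εh = αinv (γext v + φ)) :
    (∀ p ∈ R, ‖h p.1 - hh p.2‖ ≤ εh) ∧
      (∀ p ∈ R, ∀ uh ∈ Uh, ∃ u : U, ∀ xd ∈ f p.1 u, ∃ xhd ∈ fh p.2 uh,
        (xd, xhd) ∈ R) := by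
  subst hR hεh
  have hmono : ∀ a, 0 ≤ a → a ≤ v → γext a ≤ γext v := by
    intro a ha hav
    rcases hγ with hγ | rfl
    · exact hγ.1.2.1.monotoneOn (Set.mem_Ici.2 ha) (Set.mem_Ici.2 hv.le) hav
    · exact le_rfl
  have hlamle : ∀ s, 0 ≤ s → lam s ≤ s := by
    intro s hs
    rcases hs.eq_or_lt with rfl | hs
    · exact hlam.1.2.2.le
    · exact (hlamlt s hs).le
  refine ⟨?_, ?_⟩
  · intro p hp
    have hp' : V p.1 p.2 ≤ γext v + φ := hp
    obtain ⟨hinv, -, hnonneg⟩ := hαinv (γext v + φ) ((hVnonneg _ _).trans hp')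
    -- `α` is strictly increasing on `[0,∞)`, so it reflects `≤` there.
    refine (hα.1.2.1.le_iff_le (Set.mem_Ici.2 (norm_nonneg _)) (Set.mem_Ici.2 hnonneg)).1 ?_
    rw [hinv]
    exact (hV1 _ _).trans hp'
  · intro p hp uh huh
    have hp' : V p.1 p.2 ≤ γext v + φ := hp
    obtain ⟨u, hu⟩ := hmax p.1 p.2 uh huh
    refine ⟨u, fun xd hxd => ?_⟩
    obtain ⟨xhd, hxhd, hle⟩ := hu xd hxd
    refine ⟨xhd, hxhd, hle.trans (max_le ((hlamle _ (hVnonneg _ _)).trans hp') ?_)⟩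
    exact add_le_add_left (hmono _ (norm_nonneg _) (hUb uh huh)) φ
end

section
/- Let N ≥ 1 and for each i ∈ {1,…,N} let Σ_i be a discrete-time control subsystem with state set X_i, external input set U_i, internal input set W_i ⊆ ℝ^{p_i}, set-valued transition map f_i : X_i × U_i × W_i ⇒ X_i, external output map h_{1i} : X_i → ℝ^{r_i} and internal output map h_{2i} : X_i → ℝ^{q_i}; similarly let Σ̂_i be an abstraction with hatted data and internal output maps ĥ_{2i} : X̂_i → ℝ^{q̂_i}. Suppose for each i there is a storage function S_i from Σ̂_i to Σ_i with associated α_i, σ_i ∈ K∞, ρ_{i,ext} ∈ K∞ ∪ {0}, matrices W_i, Ŵ_i, H_i, symmetric matrix X_i with conformal blocks X_i^{11}, X_i^{12}, X_i^{21}, X_i^{22}, and constant ε_i ≥ 0. Let M be a coupling matrix for Σ = I(Σ_1,…,Σ_N) with M·∏_i Y_{2i} ⊆ ∏_i W_i, and let M̂ be a matrix with M̂·∏_i Ŷ_{2i} ⊆ ∏_i Ŵ_i, defining Σ̂ = I(Σ̂_1,…,Σ̂_N). Set W = diag(W_1,…,W_N), Ŵ = diag(Ŵ_1,…,Ŵ_N),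 H = diag(H_1,…,H_N), and let X(μ_1X_1,…,μ_NX_N) denote the symmetric matrix whose (1,1)-block is diag(μ_1X_1^{11},…,μ_NX_N^{11}), (1,2)-block diag(μ_1X_1^{12},…,μ_NX_N^{12}), (2,1)-block diag(μ_1X_1^{21},…,μ_NX_N^{21}), and (2,2)-block diag(μ_1X_1^{22},…,μ_NX_N^{22}). If there exist μ_1,…,μ_N > 0 such that (i) [WM; I_q]ᵀ · X(μ_1X_1,…,μ_NX_N) · [WM; I_q] ⪯ 0 (q the number of rows of H) and (ii) WMH = ŴM̂, then V(x,x̂) := Σ_{i=1}^N μ_i S_i(x_i,x̂_i) is a simulation function from the interconnected abstraction Σ̂ = I(Σ̂_1,…,Σ̂_N) to the interconnected concrete system Σ = I(Σ_1,…,Σ_N). -/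
/-!
Multiply the dissipation inequality of the `i`-th subsystem by `μᵢ` and sum. With the stacked
mismatch `z = h₂(x) - H ĥ₂(x̂)`, the condition `W M H = Ŵ M̂` shows that the stacked internal
input mismatch `W w - Ŵ ŵ` equals `W M z`, so the supply rates add up to the quadratic form of
`[WM; I]ᵀ X(μ₁X₁,…,μ_NX_N) [WM; I]` at `z` (`quadForm_blocks`, `quadForm_congruence`), which is
nonpositive by the matrix inequality.

The comparison functions are explicit: `α(s) = minᵢ μᵢ αᵢ(s)` since the sup norm of the stacked
output error is attained at one subsystem; `σ(s) = minᵢ μᵢ σᵢ(s / (N μᵢ))` since some summand of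
`V` is at least `V / N`; and `ρ(s) = ∑ᵢ μᵢ ρᵢ(s) + s`, where the extra `s` makes `ρ` of class K∞
even when every `ρᵢ` vanishes.
-/

open Filter Matrix

lemma ClassK.monotoneOn {g : ℝ → ℝ} (h : ClassK g) : MonotoneOn g (Set.Ici 0) :=
  h.2.1.monotoneOn

lemma ClassK.nonneg {g : ℝ → ℝ} (h : ClassK g) {s : ℝ} (hs : 0 ≤ s) : 0 ≤ g s :=
  h.2.2 ▸ h.monotoneOn (Set.mem_Ici.2 le_rfl) (Set.mem_Ici.2 hs) hs

lemma ClassKInf.inf' {ι : Type*} [Fintype ι] (hne : (Finset.univ : Finset ι).Nonempty)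
    {g : ι → ℝ → ℝ} (hg : ∀ i, ClassKInf (g i)) :
    ClassKInf fun s => Finset.univ.inf' hne fun i => g i s := by
  refine ⟨⟨?_, ?_, ?_⟩, ?_⟩
  · exact ContinuousOn.finset_inf'_apply hne fun i _ => (hg i).1.1
  · intro a ha b hb hab
    refine (Finset.lt_inf'_iff hne).2 fun i hi => ?_
    exact (Finset.inf'_le _ hi).trans_lt ((hg i).1.2.1 ha hb hab)
  · simp [(hg _).1.2.2]
  · refine tendsto_atTop.2 fun c => ?_
    have h : ∀ᶠ s in atTop, ∀ i, c ≤ g i s :=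
      eventually_all.2 fun i => tendsto_atTop.1 (hg i).2 c
    filter_upwards [h] with s hs
    exact Finset.le_inf' _ _ fun i _ => hs i

/-- Class K∞ is closed under positive rescaling of the argument and of the value. -/
lemma ClassKInf.rescale {g : ℝ → ℝ} (hg : ClassKInf g) {a b : ℝ} (ha : 0 < a) (hb : 0 < b) :
    ClassKInf fun s => a * g (b * s) := by
  have hmem : ∀ s ∈ Set.Ici (0 : ℝ), b * s ∈ Set.Ici (0 : ℝ) := fun s hs =>
    mul_nonneg hb.le hs
  refine ⟨⟨?_, ?_, ?_⟩, ?_⟩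
  · exact continuousOn_const.mul (hg.1.1.comp (by fun_prop) hmem)
  · intro s hs s' hs' h
    exact mul_lt_mul_of_pos_left
      (hg.1.2.1 (hmem s hs) (hmem s' hs') (mul_lt_mul_of_pos_left h hb)) ha
  · simp [hg.1.2.2]
  · exact (hg.2.comp (tendsto_id.const_mul_atTop hb)).const_mul_atTop ha

/-- A continuous monotone gain vanishing at zero becomes K∞ after adding the identity. This
handles gains in K∞ ∪ {0} without a case distinction. -/
lemma classKInf_add_id {g : ℝ → ℝ} (hc : ContinuousOn g (Set.Ici 0))
    (hm : MonotoneOn g (Set.Ici 0)) (h0 : g 0 = 0) : ClassKInf fun s => g s + s := by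
  refine ⟨⟨by fun_prop, ?_, by simp [h0]⟩, ?_⟩
  · intro a ha b hb hab
    exact add_lt_add_of_le_of_lt (hm ha hb hab.le) hab
  · refine tendsto_atTop_mono' _ ?_ tendsto_id
    filter_upwards [eventually_ge_atTop 0] with s hs
    have : g 0 ≤ g s := hm (Set.mem_Ici.2 le_rfl) (Set.mem_Ici.2 hs) hs
    simp only [id]
    linarith

lemma blockDiagonal'_mulVec_apply {ι : Type*} [Fintype ι] [DecidableEq ι] {a b : ι → Type*}
    [∀ i, Fintype (b i)] (A : ∀ i, Matrix (a i) (b i) ℝ) (v : (Σ i, b i) → ℝ)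
    (i : ι) (j : a i) :
    (blockDiagonal' A *ᵥ v) ⟨i, j⟩ = (A i *ᵥ fun k => v ⟨i, k⟩) j := by
  simp only [mulVec, dotProduct, Fintype.sum_sigma]
  rw [Finset.sum_eq_single i]
  · simp [blockDiagonal'_apply_eq]
  · intro i' _ hne
    simp [blockDiagonal'_apply_ne _ _ _ hne.symm]
  · simp

/-- The quadratic form of `X(μ₁X₁,…,μ_NX_N)` is the `μ`-weighted sum of the quadratic forms
of the `Xᵢ`, evaluated on the corresponding components. -/
lemma quadForm_blocks {ι : Type*} [Fintype ι] [DecidableEq ι] {a b : ι → Type*}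
    [∀ i, Fintype (a i)] [∀ i, Fintype (b i)]
    (A : ∀ i, Matrix (a i) (a i) ℝ) (B : ∀ i, Matrix (a i) (b i) ℝ)
    (C : ∀ i, Matrix (b i) (a i) ℝ) (D : ∀ i, Matrix (b i) (b i) ℝ) (μ : ι → ℝ)
    (v : (Σ i, a i) → ℝ) (z : (Σ i, b i) → ℝ) :
    Sum.elim v z ⬝ᵥ (fromBlocks (blockDiagonal' fun i => μ i • A i)
        (blockDiagonal' fun i => μ i • B i) (blockDiagonal' fun i => μ i • C i)
        (blockDiagonal' fun i => μ i • D i) *ᵥ Sum.elim v z) =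
      ∑ i, μ i * (Sum.elim (fun k => v ⟨i, k⟩) (fun k => z ⟨i, k⟩) ⬝ᵥ
        (fromBlocks (A i) (B i) (C i) (D i) *ᵥ
          Sum.elim (fun k => v ⟨i, k⟩) (fun k => z ⟨i, k⟩))) := by
  simp only [fromBlocks_mulVec, sumElim_dotProduct_sumElim, Sum.elim_comp_inl,
    Sum.elim_comp_inr, mul_add, Finset.sum_add_distrib]
  congr 1 <;>
  · simp only [dotProduct, Fintype.sum_sigma, Pi.add_apply, blockDiagonal'_mulVec_apply,
      smul_mulVec, Pi.smul_apply, smul_eq_mul, Finset.mul_sum]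
    refine Finset.sum_congr rfl fun i _ => Finset.sum_congr rfl fun k _ => ?_
    ring

lemma quadForm_congruence {m n : Type*} [Fintype m] [Fintype n]
    (P : Matrix m n ℝ) (Q : Matrix m m ℝ) (z : n → ℝ) :
    (P *ᵥ z) ⬝ᵥ (Q *ᵥ (P *ᵥ z)) = z ⬝ᵥ ((Pᵀ * Q * P) *ᵥ z) := by
  rw [← mulVec_mulVec, ← mulVec_mulVec, dotProduct_mulVec z, vecMul_transpose]

/-- Compositionality theorem (Theorem 2 in the paper): if each subsystem `Σᵢ` admits an
abstraction `Σ̂ᵢ` with storage function `Sᵢ`, and the matrix conditions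
`[WM; I_q]ᵀ X(μ₁X₁,…,μ_NX_N) [WM; I_q] ⪯ 0` and `WMH = ŴM̂` hold for some `μᵢ > 0`,
then `V(x,x̂) := ∑ᵢ μᵢ Sᵢ(xᵢ,x̂ᵢ)` is a simulation function from the interconnected
abstraction `Σ̂ = I(Σ̂₁,…,Σ̂_N)` (coupled by `M̂`) to `Σ = I(Σ₁,…,Σ_N)` (coupled by `M`). -/
theorem stmt_5
    (N : ℕ) (hN : 1 ≤ N)
    -- state spaces of the subsystems and their abstractions
    {X Xh : Fin N → Type} [∀ i, TopologicalSpace (X i)] [∀ i, TopologicalSpace (Xh i)]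
    -- concrete external input spaces
    {U : Fin N → Type}
    -- dimensions: abstract external inputs, internal inputs (concrete/abstract),
    -- external outputs, internal outputs (concrete/abstract), and ranges of `Wᵢ, Ŵᵢ`
    (m p ph r q qh t : Fin N → ℕ)
    -- abstract external input sets and internal input sets
    (Uh : ∀ i, Set (Fin (m i) → ℝ))
    (Wset : ∀ i, Set (Fin (p i) → ℝ)) (Whset : ∀ i, Set (Fin (ph i) → ℝ))
    -- transition maps
    (f : ∀ i, X i → U i → (Fin (p i) → ℝ) → Set (X i))
    (fh : ∀ i, Xh i → (Fin (m i) → ℝ) → (Fin (ph i) → ℝ) → Set (Xh i))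
    -- external and internal output maps (note `Ŷ₁ᵢ ⊆ Y₁ᵢ`)
    (h1 : ∀ i, X i → Fin (r i) → ℝ) (h1h : ∀ i, Xh i → Fin (r i) → ℝ)
    (h2 : ∀ i, X i → Fin (q i) → ℝ) (h2h : ∀ i, Xh i → Fin (qh i) → ℝ)
    -- storage functions and their data
    (S : ∀ i, X i → Xh i → ℝ)
    (hScont : ∀ i, Continuous fun pr : X i × Xh i => S i pr.1 pr.2)
    (hSnonneg : ∀ i x xh, 0 ≤ S i x xh)
    (α σ ρ : Fin N → ℝ → ℝ) (ε : Fin N → ℝ)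
    (hα : ∀ i, ClassKInf (α i)) (hσ : ∀ i, ClassKInf (σ i))
    (hρ : ∀ i, ClassKInf (ρ i) ∨ ρ i = fun _ => 0) (hε : ∀ i, 0 ≤ ε i)
    (Wm : ∀ i, Matrix (Fin (t i)) (Fin (p i)) ℝ)
    (Whm : ∀ i, Matrix (Fin (t i)) (Fin (ph i)) ℝ)
    (Hm : ∀ i, Matrix (Fin (q i)) (Fin (qh i)) ℝ)
    (X11 : ∀ i, Matrix (Fin (t i)) (Fin (t i)) ℝ)
    (X12 : ∀ i, Matrix (Fin (t i)) (Fin (q i)) ℝ)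
    (X21 : ∀ i, Matrix (Fin (q i)) (Fin (t i)) ℝ)
    (X22 : ∀ i, Matrix (Fin (q i)) (Fin (q i)) ℝ)
    -- each `Xᵢ` is symmetric
    (hXsymm : ∀ i, (X11 i)ᵀ = X11 i ∧ (X22 i)ᵀ = X22 i ∧ (X12 i)ᵀ = X21 i)
    -- storage function condition (i)
    (hS1 : ∀ i, ∀ (x : X i) (xh : Xh i), α i ‖h1 i x - h1h i xh‖ ≤ S i x xh)
    -- storage function condition (ii)
    (hS2 : ∀ i, ∀ (x : X i) (xh : Xh i), ∀ uh ∈ Uh i, ∃ u : U i,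
      ∀ w ∈ Wset i, ∀ wh ∈ Whset i, ∀ xd ∈ f i x u w, ∃ xhd ∈ fh i xh uh wh,
        S i xd xhd - S i x xh ≤ -σ i (S i x xh) + ρ i ‖uh‖ +
          (Sum.elim (Wm i *ᵥ w - Whm i *ᵥ wh) (h2 i x - Hm i *ᵥ h2h i xh)) ⬝ᵥ
            (fromBlocks (X11 i) (X12 i) (X21 i) (X22 i) *ᵥ
              Sum.elim (Wm i *ᵥ w - Whm i *ᵥ wh) (h2 i x - Hm i *ᵥ h2h i xh)) + ε i)
    -- coupling matrices of the concrete and abstract interconnections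
    (Mc : Matrix (Σ i, Fin (p i)) (Σ i, Fin (q i)) ℝ)
    (Mh : Matrix (Σ i, Fin (ph i)) (Σ i, Fin (qh i)) ℝ)
    -- well-posedness of the interconnections: `M ∏ Y₂ᵢ ⊆ ∏ Wᵢ` and `M̂ ∏ Ŷ₂ᵢ ⊆ ∏ Ŵᵢ`
    (hMwell : ∀ x : ∀ i, X i, ∀ i,
      (fun j => (Mc *ᵥ fun k : Σ i, Fin (q i) => h2 k.1 (x k.1) k.2) ⟨i, j⟩) ∈ Wset i)
    (hMhwell : ∀ xh : ∀ i, Xh i, ∀ i,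
      (fun j => (Mh *ᵥ fun k : Σ i, Fin (qh i) => h2h k.1 (xh k.1) k.2) ⟨i, j⟩) ∈ Whset i)
    -- the coefficients μᵢ
    (μ : Fin N → ℝ) (hμ : ∀ i, 0 < μ i)
    -- condition (i): `[WM; I_q]ᵀ X(μ₁X₁,…,μ_NX_N) [WM; I_q] ⪯ 0`
    (hLMI : ∀ z : (Σ i, Fin (q i)) → ℝ,
      z ⬝ᵥ (((fromRows (blockDiagonal' Wm * Mc) (1 : Matrix (Σ i, Fin (q i)) (Σ i, Fin (q i)) ℝ))ᵀ *
          fromBlocks (blockDiagonal' fun i => μ i • X11 i) (blockDiagonal' fun i => μ i • X12 i)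
            (blockDiagonal' fun i => μ i • X21 i) (blockDiagonal' fun i => μ i • X22 i) *
          fromRows (blockDiagonal' Wm * Mc) 1) *ᵥ z) ≤ 0)
    -- condition (ii): `WMH = ŴM̂`
    (hEq : blockDiagonal' Wm * Mc * blockDiagonal' Hm = blockDiagonal' Whm * Mh)
    -- the candidate simulation function
    (V : (∀ i, X i) → (∀ i, Xh i) → ℝ)
    (hV : ∀ x xh, V x xh = ∑ i, μ i * S i (x i) (xh i)) :
    -- `V` is a simulation function from `Σ̂ = I(Σ̂₁,…,Σ̂_N)` to `Σ = I(Σ₁,…,Σ_N)`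
    (Continuous fun pr : (∀ i, X i) × (∀ i, Xh i) => V pr.1 pr.2) ∧
    ∃ αc σc ρc : ℝ → ℝ, ∃ εc : ℝ,
      ClassKInf αc ∧ ClassKInf σc ∧ (ClassKInf ρc ∨ ρc = fun _ => 0) ∧ 0 ≤ εc ∧
      (∀ (x : ∀ i, X i) (xh : ∀ i, Xh i),
        αc ‖(fun k : Σ i, Fin (r i) => h1 k.1 (x k.1) k.2) -
            (fun k : Σ i, Fin (r i) => h1h k.1 (xh k.1) k.2)‖ ≤ V x xh) ∧
      (∀ (x : ∀ i, X i) (xh : ∀ i, Xh i) (uh : ∀ i, Fin (m i) → ℝ),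
        (∀ i, uh i ∈ Uh i) → ∃ u : ∀ i, U i,
          ∀ xd : ∀ i, X i,
            (∀ i, xd i ∈ f i (x i) (u i)
              fun j => (Mc *ᵥ fun k : Σ i, Fin (q i) => h2 k.1 (x k.1) k.2) ⟨i, j⟩) →
            ∃ xhd : ∀ i, Xh i,
              (∀ i, xhd i ∈ fh i (xh i) (uh i)
                fun j => (Mh *ᵥ fun k : Σ i, Fin (qh i) => h2h k.1 (xh k.1) k.2) ⟨i, j⟩) ∧
              V xd xhd - V x xh ≤ -σc (V x xh) + ρc ‖uh‖ + εc) := by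
  have hne : (Finset.univ : Finset (Fin N)).Nonempty := ⟨⟨0, hN⟩, Finset.mem_univ _⟩
  have hNpos : (0 : ℝ) < N := by exact_mod_cast hN
  have hterm : ∀ (x : ∀ i, X i) (xh : ∀ i, Xh i) i, 0 ≤ μ i * S i (x i) (xh i) := fun x xh i =>
    mul_nonneg (hμ i).le (hSnonneg i _ _)
  have hρcont : ∀ i, ContinuousOn (ρ i) (Set.Ici 0) := fun i => by
    rcases hρ i with h | h
    · exact h.1.1
    · rw [h]; exact continuousOn_const
  have hρmono : ∀ i, MonotoneOn (ρ i) (Set.Ici 0) := fun i => by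
    rcases hρ i with h | h
    · exact h.1.monotoneOn
    · rw [h]; exact monotoneOn_const
  have hρzero : ∀ i, ρ i 0 = 0 := fun i => by
    rcases hρ i with h | h
    · exact h.1.2.2
    · rw [h]
  refine ⟨?_, fun s => Finset.univ.inf' hne fun i => μ i * α i (1 * s),
    fun s => Finset.univ.inf' hne fun i => μ i * σ i ((N * μ i)⁻¹ * s),
    fun s => (∑ i, μ i * ρ i s) + s, ∑ i, μ i * ε i, ?_, ?_, Or.inl ?_, ?_, ?_, ?_⟩
  · simp only [hV]
    refine continuous_finsetSum _ fun i _ => continuous_const.mul ?_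
    exact (hScont i).comp (by fun_prop :
      Continuous fun pr : (∀ i, X i) × (∀ i, Xh i) => (pr.1 i, pr.2 i))
  · exact ClassKInf.inf' hne fun i => (hα i).rescale (hμ i) one_pos
  · exact ClassKInf.inf' hne fun i =>
      (hσ i).rescale (hμ i) (inv_pos.2 (mul_pos hNpos (hμ i)))
  · refine classKInf_add_id ?_ ?_ (by simp [hρzero])
    · exact continuousOn_finsetSum _ fun i _ => continuousOn_const.mul (hρcont i)
    · intro a ha b hb hab
      exact Finset.sum_le_sum fun i _ =>
        mul_le_mul_of_nonneg_left (hρmono i ha hb hab) (hμ i).le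
  · exact Finset.sum_nonneg fun i _ => mul_nonneg (hμ i).le (hε i)
  · intro x xh
    -- the subsystem with the largest output error dominates the sup norm
    obtain ⟨i, -, hi⟩ := Finset.exists_max_image Finset.univ
      (fun i => ‖h1 i (x i) - h1h i (xh i)‖) hne
    have hle : ‖(fun k : Σ i, Fin (r i) => h1 k.1 (x k.1) k.2) -
        (fun k : Σ i, Fin (r i) => h1h k.1 (xh k.1) k.2)‖ ≤ ‖h1 i (x i) - h1h i (xh i)‖ := by
      refine (pi_norm_le_iff_of_nonneg (norm_nonneg _)).2 fun k => ?_
      exact (norm_le_pi_norm (h1 k.1 (x k.1) - h1h k.1 (xh k.1)) k.2).trans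
        (hi k.1 (Finset.mem_univ _))
    calc _ ≤ μ i * α i (1 * _) := Finset.inf'_le _ (Finset.mem_univ i)
      _ ≤ μ i * α i ‖h1 i (x i) - h1h i (xh i)‖ := by
        rw [one_mul]
        exact mul_le_mul_of_nonneg_left
          ((hα i).1.monotoneOn (norm_nonneg _) (norm_nonneg _) hle) (hμ i).le
      _ ≤ μ i * S i (x i) (xh i) := mul_le_mul_of_nonneg_left (hS1 i _ _) (hμ i).le
      _ ≤ V x xh := by
        rw [hV]
        exact Finset.single_le_sum (fun j _ => hterm x xh j) (Finset.mem_univ i)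
  · intro x xh uh huh
    choose u hu using fun i => hS2 i (x i) (xh i) (uh i) (huh i)
    refine ⟨u, fun xd hxd => ?_⟩
    choose xhd hmem hdec using fun i =>
      hu i _ (hMwell x i) _ (hMhwell xh i) (xd i) (hxd i)
    refine ⟨xhd, hmem, ?_⟩
    -- stacked internal outputs, and the stacked mismatch `z = h₂(x) - H ĥ₂(x̂)`
    set y : (Σ i, Fin (q i)) → ℝ := fun k => h2 k.1 (x k.1) k.2 with hy
    set yh : (Σ i, Fin (qh i)) → ℝ := fun k => h2h k.1 (xh k.1) k.2 with hyh
    set z := y - blockDiagonal' Hm *ᵥ yh with hz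
    have hz_apply : ∀ i, h2 i (x i) - Hm i *ᵥ h2h i (xh i) = fun k => z ⟨i, k⟩ := by
      intro i
      funext k
      simp only [hz, Pi.sub_apply, blockDiagonal'_mulVec_apply, hy, hyh]
    -- `W M H = Ŵ M̂` turns the internal input mismatch into `W M z`
    have hw : (blockDiagonal' Wm * Mc) *ᵥ z =
        blockDiagonal' Wm *ᵥ (Mc *ᵥ y) - blockDiagonal' Whm *ᵥ (Mh *ᵥ yh) := by
      rw [hz, mulVec_sub, mulVec_mulVec, hEq, mulVec_mulVec, mulVec_mulVec]
    have hw_apply : ∀ i, (Wm i *ᵥ fun j => (Mc *ᵥ y) ⟨i, j⟩) -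
        (Whm i *ᵥ fun j => (Mh *ᵥ yh) ⟨i, j⟩) =
          fun k => ((blockDiagonal' Wm * Mc) *ᵥ z) ⟨i, k⟩ := by
      intro i
      funext k
      simp only [hw, Pi.sub_apply, blockDiagonal'_mulVec_apply]
    have hquad := (quadForm_congruence _ _ z).trans_le (hLMI z)
    rw [fromRows_mulVec, one_mulVec, quadForm_blocks] at hquad
    simp only [hz_apply, hw_apply] at hdec
    have hσle : (Finset.univ.inf' hne fun i => μ i * σ i ((N * μ i)⁻¹ * V x xh)) ≤
        ∑ i, μ i * σ i (S i (x i) (xh i)) := by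
      -- the largest of the `N` summands of `V` is at least `V / N`
      obtain ⟨i, -, hi⟩ := Finset.exists_max_image Finset.univ
        (fun i => μ i * S i (x i) (xh i)) hne
      have hVle : V x xh ≤ N * (μ i * S i (x i) (xh i)) := by
        rw [hV]
        simpa using Finset.sum_le_card_nsmul Finset.univ _ _ hi
      have hV0 : 0 ≤ V x xh := by
        rw [hV]
        exact Finset.sum_nonneg fun j _ => hterm x xh j
      have hpos : 0 < N * μ i := mul_pos hNpos (hμ i)
      have harg : (N * μ i)⁻¹ * V x xh ≤ S i (x i) (xh i) := by
        rw [inv_mul_le_iff₀ hpos, mul_assoc]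
        exact hVle
      calc _ ≤ μ i * σ i ((N * μ i)⁻¹ * V x xh) := Finset.inf'_le _ (Finset.mem_univ i)
        _ ≤ μ i * σ i (S i (x i) (xh i)) := mul_le_mul_of_nonneg_left
          ((hσ i).1.monotoneOn (mul_nonneg (inv_pos.2 hpos).le hV0) (hSnonneg i _ _) harg)
          (hμ i).le
        _ ≤ _ := Finset.single_le_sum (f := fun j => μ j * σ j (S j (x j) (xh j)))
          (fun j _ => mul_nonneg (hμ j).le ((hσ j).1.nonneg (hSnonneg j _ _)))
          (Finset.mem_univ i)
    have hρle : ∑ i, μ i * ρ i ‖uh i‖ ≤ ∑ i, μ i * ρ i ‖uh‖ :=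
      Finset.sum_le_sum fun i _ => mul_le_mul_of_nonneg_left
        (hρmono i (norm_nonneg _) (norm_nonneg _) (norm_le_pi_norm uh i)) (hμ i).le
    have hsum := Finset.sum_le_sum fun i (_ : i ∈ Finset.univ) =>
      mul_le_mul_of_nonneg_left (hdec i) (hμ i).le
    simp only [mul_add, mul_sub, mul_neg, Finset.sum_add_distrib, Finset.sum_sub_distrib,
      Finset.sum_neg_distrib] at hsum
    rw [← hV, ← hV] at hsum
    have := norm_nonneg uh
    linarith
end

section
/- Let N ≥ 1, let α_1,…,α_N be class-K∞ functions and μ_1,…,μ_N > 0. Define ᾱ(s) := max{ Σ_{i=1}^N α_i⁻¹(s_i) : s_1,…,s_N ≥ 0, Σ_{i=1}^N μ_i s_i = s } for s ≥ 0. Then the maximum is attained for every s ≥ 0 and ᾱ is a class-K∞ function; in particular, for all s_1,…,s_N ≥ 0 one has Σ_{i=1}^N α_i⁻¹(s_i) ≤ ᾱ(Σ_{i=1}^N μ_i s_i). -/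
/-!
Rescaling `sᵢ = s tᵢ` turns the constraint set into the fixed compact simplex
`Δ = {t ≥ 0 : ∑ μᵢ tᵢ = 1}` (`weightedSimplex`), so that `ᾱ(s) = max_{t ∈ Δ} ∑ αᵢ⁻¹(s tᵢ)` for
`s ≥ 0`, including `s = 0`. The objective is jointly continuous in `(s, t)`, hence the maximum is
attained and, `Δ` being independent of `s`, depends continuously on `s`. At a maximiser `t` for `s`
some `tᵢ` is positive, so the objective at the same `t` strictly increases with `s`; this gives
strict monotonicity. Evaluating at a vertex of `Δ` bounds `ᾱ(s)` below by `αᵢ⁻¹(s / μᵢ)`, which is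
unbounded.
-/

open Filter

/-- The simplex `{t ≥ 0 : ∑ μᵢ tᵢ = 1}`. -/
def weightedSimplex {N : ℕ} (μ : Fin N → ℝ) : Set (Fin N → ℝ) :=
  {t | (∀ i, 0 ≤ t i) ∧ ∑ i, μ i * t i = 1}

lemma isCompact_weightedSimplex {N : ℕ} {μ : Fin N → ℝ} (hμ : ∀ i, 0 < μ i) :
    IsCompact (weightedSimplex μ) := by
  refine (isCompact_univ_pi (fun i => isCompact_Icc (a := (0:ℝ)) (b := 1 / μ i))).of_isClosed_subset
    ?_ ?_
  · refine IsClosed.inter (s₁ := {t : Fin N → ℝ | ∀ i, 0 ≤ t i}) ?_ ?_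
    · simp only [Set.ofPred_forall]
      exact isClosed_iInter fun i => isClosed_le continuous_const (continuous_apply i)
    · exact isClosed_eq (by fun_prop) continuous_const
  · rintro t ⟨h0, h1⟩ i -
    refine ⟨h0 i, ?_⟩
    rw [le_div_iff₀ (hμ i), mul_comm, ← h1]
    exact Finset.single_le_sum (f := fun i => μ i * t i)
      (fun j _ => mul_nonneg (hμ j).le (h0 j)) (Finset.mem_univ i)

lemma vertex_mem_weightedSimplex {N : ℕ} {μ : Fin N → ℝ} (hμ : ∀ i, 0 < μ i) (i : Fin N) :
    Pi.single i (1 / μ i) ∈ weightedSimplex μ := by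
  constructor
  · intro j
    have h : (0 : Fin N → ℝ) ≤ Pi.single i (1 / μ i) :=
      Pi.single_nonneg.2 (one_div_pos.2 (hμ i)).le
    exact h j
  · rw [Finset.sum_eq_single i]
    · simp [(hμ i).ne']
    · intro j _ hj
      simp [hj]
    · simp

/-- An inverse on `[0,∞)` of a class-K∞ function is class-K∞. -/
lemma ClassKInf.of_inverse {a b : ℝ → ℝ} (ha : ClassKInf a)
    (hb : ∀ s ≥ (0:ℝ), a (b s) = s ∧ b (a s) = s ∧ 0 ≤ b s) : ClassKInf b := by
  obtain ⟨⟨-, hm, h0⟩, -⟩ := ha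
  have hnn : ∀ s, 0 ≤ s → 0 ≤ a s := fun s hs => by
    rw [← h0]
    exact hm.monotoneOn Set.self_mem_Ici hs hs
  have hb0 : b 0 = 0 := by
    have := (hb 0 le_rfl).2.1
    rwa [h0] at this
  have hbm : StrictMonoOn b (Set.Ici 0) := by
    intro x hx y hy hxy
    rw [← hm.lt_iff_lt (hb x hx).2.2 (hb y hy).2.2, (hb x hx).1, (hb y hy).1]
    exact hxy
  refine ⟨⟨?_, hbm, hb0⟩, ?_⟩
  · -- Extended by the identity on the negative axis, `b` is monotone and surjective on `ℝ`.
    let g : ℝ → ℝ := fun x => if 0 ≤ x then b x else x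
    have hg : Monotone g := by
      intro x y hxy
      simp only [g]
      split_ifs with h1 h2 h2
      · exact hbm.monotoneOn h1 h2 hxy
      · linarith
      · linarith [(hb y h2).2.2]
      · exact hxy
    have hgs : Function.Surjective g := by
      intro y
      by_cases hy : 0 ≤ y
      · exact ⟨a y, by simp [g, hnn y hy, (hb y hy).2.1]⟩
      · exact ⟨y, by simp [g, hy]⟩
    refine (hg.continuous_of_surjective hgs).continuousOn.congr ?_
    intro x hx
    simp [g, Set.mem_Ici.1 hx]
  · rw [tendsto_atTop]
    intro M
    filter_upwards [eventually_ge_atTop (a (max M 0))] with x hx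
    have h := hbm.monotoneOn (hnn _ (le_max_right M 0)) ((hnn _ (le_max_right M 0)).trans hx) hx
    rw [(hb _ (le_max_right M 0)).2.1] at h
    exact (le_max_left _ _).trans h

/-- The rescaled objective `∑ bᵢ(s tᵢ)`. Arguments are clamped at `0` so that it is continuous on
all of `ℝ × ℝᴺ` although the `bᵢ` are only controlled on `[0,∞)`. -/
def rescaledSum {N : ℕ} (b : Fin N → ℝ → ℝ) (s : ℝ) (t : Fin N → ℝ) : ℝ :=
  ∑ i, b i (max (s * t i) 0)

lemma continuous_rescaledSum {N : ℕ} {b : Fin N → ℝ → ℝ} (hb : ∀ i, ClassKInf (b i)) :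
    Continuous (Function.uncurry (rescaledSum b)) := by
  unfold Function.uncurry rescaledSum
  refine continuous_finsetSum _ fun i _ => ?_
  exact (hb i).1.1.comp_continuous (by fun_prop) fun x => Set.mem_Ici.2 (le_max_right _ _)

/-- For `s ≥ 0` the attainable values are those of the rescaled objective on the simplex;
at `s = 0` this uses that the simplex is nonempty. -/
lemma values_eq_image {N : ℕ} (hN : 1 ≤ N) {b : Fin N → ℝ → ℝ} {μ : Fin N → ℝ}
    (hμ : ∀ i, 0 < μ i) {s : ℝ} (hs : 0 ≤ s) :
    {v : ℝ | ∃ sv : Fin N → ℝ,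
      (∀ i, 0 ≤ sv i) ∧ (∑ i, μ i * sv i) = s ∧ v = ∑ i, b i (sv i)} =
    rescaledSum b s '' weightedSimplex μ := by
  ext v
  constructor
  · rintro ⟨sv, h0, h1, rfl⟩
    rcases hs.eq_or_lt with rfl | hs
    · refine ⟨_, vertex_mem_weightedSimplex hμ ⟨0, hN⟩, ?_⟩
      rw [Finset.sum_eq_zero_iff_of_nonneg (fun i _ => mul_nonneg (hμ i).le (h0 i))] at h1
      refine Finset.sum_congr rfl fun i hi => ?_
      have : sv i = 0 := (mul_eq_zero.1 (h1 i hi)).resolve_left (hμ i).ne'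
      simp [this]
    · refine ⟨fun i => sv i / s, ⟨fun i => div_nonneg (h0 i) hs.le, ?_⟩, ?_⟩
      · simp_rw [← mul_div_assoc]
        rw [← Finset.sum_div, h1, div_self hs.ne']
      · refine Finset.sum_congr rfl fun i _ => ?_
        rw [mul_div_cancel₀ _ hs.ne', max_eq_left (h0 i)]
  · rintro ⟨t, ⟨h0, h1⟩, rfl⟩
    refine ⟨fun i => s * t i, fun i => mul_nonneg hs (h0 i), ?_, ?_⟩
    · simp_rw [mul_left_comm _ s]
      rw [← Finset.mul_sum, h1, mul_one]
    · refine Finset.sum_congr rfl fun i _ => ?_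
      rw [max_eq_left (mul_nonneg hs (h0 i))]

lemma rescaledSum_lt {N : ℕ} {b : Fin N → ℝ → ℝ} {μ : Fin N → ℝ} (hb : ∀ i, ClassKInf (b i))
    {t : Fin N → ℝ} (ht : t ∈ weightedSimplex μ) {x y : ℝ} (hx : 0 ≤ x) (hxy : x < y) :
    rescaledSum b x t < rescaledSum b y t := by
  obtain ⟨h0, h1⟩ := ht
  have hpos : ∃ i, 0 < t i := by
    by_contra! h
    have : ∀ i, t i = 0 := fun i => le_antisymm (h i) (h0 i)
    simp [this] at h1
  obtain ⟨i, hi⟩ := hpos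
  refine Finset.sum_lt_sum (fun j _ => ?_) ⟨i, Finset.mem_univ i, ?_⟩
  · refine (hb j).1.2.1.monotoneOn (Set.mem_Ici.2 (le_max_right _ _))
      (Set.mem_Ici.2 (le_max_right _ _)) ?_
    exact max_le_max (mul_le_mul_of_nonneg_right hxy.le (h0 j)) le_rfl
  · refine (hb i).1.2.1 (Set.mem_Ici.2 (le_max_right _ _))
      (Set.mem_Ici.2 (le_max_right _ _)) ?_
    rw [max_eq_left (mul_nonneg hx hi.le), max_eq_left (mul_nonneg (hx.trans hxy.le) hi.le)]
    exact mul_lt_mul_of_pos_right hxy hi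

lemma rescaledSum_vertex {N : ℕ} {b : Fin N → ℝ → ℝ} {μ : Fin N → ℝ} (hμ : ∀ i, 0 < μ i)
    (hb : ∀ i, ClassKInf (b i)) (i : Fin N) {s : ℝ} (hs : 0 ≤ s) :
    rescaledSum b s (Pi.single i (1 / μ i)) = b i (s / μ i) := by
  unfold rescaledSum
  rw [Finset.sum_eq_single i]
  · rw [Pi.single_eq_same, mul_one_div, max_eq_left (div_nonneg hs (hμ i).le)]
  · intro j _ hj
    simp [hj, (hb j).1.2.2]
  · simp

/-- Let `α₁,…,α_N` be class-K∞ and `μᵢ > 0`, and define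
`ᾱ(s) = max { ∑ αᵢ⁻¹(sᵢ) : sᵢ ≥ 0, ∑ μᵢ sᵢ = s }`. Then the maximum is attained for every
`s ≥ 0`, `ᾱ` is class-K∞, and `∑ αᵢ⁻¹(sᵢ) ≤ ᾱ(∑ μᵢ sᵢ)` for all `sᵢ ≥ 0`. -/
theorem stmt_6
    (N : ℕ) (hN : 1 ≤ N)
    (α αinv : Fin N → ℝ → ℝ) (μ : Fin N → ℝ)
    (hα : ∀ i, ClassKInf (α i)) (hμ : ∀ i, 0 < μ i)
    -- `αinv i` is the inverse of `α i` on `[0,∞)`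
    (hαinv : ∀ i, ∀ s ≥ (0:ℝ), α i (αinv i s) = s ∧ αinv i (α i s) = s ∧ 0 ≤ αinv i s)
    (A : ℝ → Set ℝ)
    (hA : ∀ s, A s = {v : ℝ | ∃ sv : Fin N → ℝ,
      (∀ i, 0 ≤ sv i) ∧ (∑ i, μ i * sv i) = s ∧ v = ∑ i, αinv i (sv i)})
    (abar : ℝ → ℝ) (habar : ∀ s, abar s = sSup (A s)) :
    (∀ s ≥ (0:ℝ), ∃ v ∈ A s, ∀ v' ∈ A s, v' ≤ v) ∧
    ClassKInf abar ∧
    (∀ sv : Fin N → ℝ, (∀ i, 0 ≤ sv i) →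
      ∑ i, αinv i (sv i) ≤ abar (∑ i, μ i * sv i)) := by
  have hb : ∀ i, ClassKInf (αinv i) := fun i => (hα i).of_inverse (hαinv i)
  have hc := continuous_rescaledSum hb
  have hK := isCompact_weightedSimplex hμ
  have hAimg : ∀ s, 0 ≤ s → A s = rescaledSum αinv s '' weightedSimplex μ := fun s hs => by
    rw [hA]
    exact values_eq_image hN hμ hs
  have hcs : ∀ s, Continuous (rescaledSum αinv s) := fun s =>
    hc.comp (Continuous.prodMk_right s)
  have hne : (weightedSimplex μ).Nonempty := ⟨_, vertex_mem_weightedSimplex hμ ⟨0, hN⟩⟩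
  have hAc : ∀ s, 0 ≤ s → IsCompact (A s) := fun s hs => by
    rw [hAimg s hs]
    exact hK.image (hcs s)
  have hAne : ∀ s, 0 ≤ s → (A s).Nonempty := fun s hs => by
    rw [hAimg s hs]
    exact hne.image _
  have hle : ∀ s, 0 ≤ s → ∀ v ∈ A s, v ≤ abar s := fun s hs v hv => by
    rw [habar]
    exact le_csSup (hAc s hs).bddAbove hv
  have hmem : ∀ s, 0 ≤ s → abar s ∈ A s := fun s hs => by
    rw [habar]
    exact (hAc s hs).sSup_mem (hAne s hs)
  refine ⟨fun s hs => ⟨abar s, hmem s hs, hle s hs⟩, ⟨⟨?_, ?_, ?_⟩, ?_⟩, ?_⟩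
  · refine (hK.continuous_sSup (f := rescaledSum αinv) hc).continuousOn.congr fun s hs => ?_
    rw [habar, hAimg s hs]
  · intro x hx y hy hxy
    have h := hmem x hx
    rw [hAimg x hx] at h
    obtain ⟨t, ht, htx⟩ := h
    rw [← htx]
    refine (rescaledSum_lt hb ht hx hxy).trans_le (hle y hy _ ?_)
    rw [hAimg y hy]
    exact ⟨t, ht, rfl⟩
  · have h := hmem 0 le_rfl
    rw [hAimg 0 le_rfl] at h
    obtain ⟨t, -, h⟩ := h
    rw [← h]
    simp [rescaledSum, fun i => (hb i).1.2.2]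
  · let i : Fin N := ⟨0, hN⟩
    refine tendsto_atTop_mono' atTop ?_
      ((hb i).2.comp (tendsto_id.atTop_div_const (hμ i)))
    filter_upwards [eventually_ge_atTop 0] with s hs
    apply hle s hs
    rw [hAimg s hs]
    exact ⟨_, vertex_mem_weightedSimplex hμ i, rescaledSum_vertex hμ hb i hs⟩
  · intro sv hsv
    refine hle _ (Finset.sum_nonneg fun i _ => mul_nonneg (hμ i).le (hsv i)) _ ?_
    rw [hA]
    exact ⟨sv, hsv, rfl, rfl⟩
end

section
/- Let X ⊆ ℝⁿ, let U and W be subsets of normed vector spaces, let f : X × U × W → X be a (deterministic, non-blocking) transition map, and let h_2 : X → ℝ^{q} be an internal output map. Suppose Σ is incrementally passivable, i.e., there exist H : X → U, a continuous G : X × X → [0,∞), functions α̲, κ̂ ∈ K∞ and a symmetric matrix X̄ ∈ ℝ^{(p+q)×(p+q)} (where W ⊆ ℝ^p) such that for all x, x' ∈ X, u ∈ U, w, w' ∈ W: (15) α̲(‖x − x'‖) ≤ G(x,x'), and (16) G(f(x,H(x)+u,w), f(x',H(x')+u,w')) − G(x,x') ≤ −κ̂(G(x,x')) + [w − w'; h_2(x)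 − h_2(x')]ᵀ X̄ [w − w'; h_2(x) − h_2(x')]. Suppose further there is γ ∈ K∞ with G(x,x') − G(x,x'') ≤ γ(‖x' − x''‖) for all x, x', x'' ∈ X. Let η > 0, let X̂ ⊆ X, Û ⊆ U, Ŵ ⊆ W, and define the abstract transition map f̂(x̂,û,ŵ) := { x̂_d ∈ X̂ : ‖x̂_d − f(x̂, H(x̂)+û, ŵ)‖ ≤ η/2 }. Then G is a storage function from the abstraction Σ̂ to Σ; concretely: (a) α̲(‖x − x̂‖) ≤ G(x,x̂) for all x ∈ X, x̂ ∈ X̂, and (b) for all x ∈ X, x̂ ∈ X̂, û ∈ Û, taking u := H(x) + û, for all w ∈ W, ŵ ∈ Ŵ and all x̂_d ∈ f̂(x̂,û,ŵ): G(f(x,u,w), x̂_d) − G(x,x̂) ≤ −κ̂(G(x,x̂)) + [w − ŵ; h_2(x) − h_2(x̂)]ᵀ X̄ [w − ŵ; h_2(x) − h_2(x̂)] + γ(η/2). -/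
open Filter Matrix

/-- Theorem 3 of the paper: if `Σ` is incrementally passivable (witnessed by `H`, `G`,
`α̲`, `κ̂` and the symmetric supply matrix `X̄`), and `G` satisfies the triangle-type
inequality `G(x,x') − G(x,x'') ≤ γ(‖x' − x''‖)`, then `G` is a storage function from the
finite abstraction `Σ̂` (with state quantization `η` and transitions
`x̂_d ∈ f̂(x̂,û,ŵ) ↔ x̂_d ∈ X̂ ∧ ‖x̂_d − f(x̂,H(x̂)+û,ŵ)‖ ≤ η/2`) to `Σ`. -/
theorem stmt_9
    (n pd qd : ℕ)
    {EU : Type*} [NormedAddCommGroup EU]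
    (Xset : Set (Fin n → ℝ)) (Uset : Set EU) (Wset : Set (Fin pd → ℝ))
    (f : (Fin n → ℝ) → EU → (Fin pd → ℝ) → (Fin n → ℝ))
    (hf : ∀ x ∈ Xset, ∀ u : EU, ∀ w ∈ Wset, f x u w ∈ Xset)
    (h2 : (Fin n → ℝ) → Fin qd → ℝ)
    -- incremental passivability data
    (H : (Fin n → ℝ) → EU)
    (G : (Fin n → ℝ) → (Fin n → ℝ) → ℝ)
    (hGcont : Continuous fun pr : (Fin n → ℝ) × (Fin n → ℝ) => G pr.1 pr.2)
    (hGnonneg : ∀ x x', 0 ≤ G x x')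
    (αlow κh : ℝ → ℝ) (hαlow : ClassKInf αlow) (hκh : ClassKInf κh)
    (Xbar : Matrix (Fin pd ⊕ Fin qd) (Fin pd ⊕ Fin qd) ℝ) (hXbar : Xbarᵀ = Xbar)
    -- (15): lower bound
    (h15 : ∀ x ∈ Xset, ∀ x' ∈ Xset, αlow ‖x - x'‖ ≤ G x x')
    -- (16): dissipation inequality
    (h16 : ∀ x ∈ Xset, ∀ x' ∈ Xset, ∀ u ∈ Uset, ∀ w ∈ Wset, ∀ w' ∈ Wset,
      G (f x (H x + u) w) (f x' (H x' + u) w') - G x x' ≤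
        -κh (G x x') +
        (Sum.elim (w - w') (h2 x - h2 x')) ⬝ᵥ (Xbar *ᵥ Sum.elim (w - w') (h2 x - h2 x')))
    -- triangle-type inequality (17)
    (γ : ℝ → ℝ) (hγ : ClassKInf γ)
    (hTI : ∀ x ∈ Xset, ∀ x' ∈ Xset, ∀ x'' ∈ Xset, G x x' - G x x'' ≤ γ ‖x' - x''‖)
    -- data of the abstraction
    (η : ℝ) (hη : 0 < η)
    (Xh : Set (Fin n → ℝ)) (hXh : Xh ⊆ Xset)
    (Uh : Set EU) (hUh : Uh ⊆ Uset)
    (Wh : Set (Fin pd → ℝ)) (hWh : Wh ⊆ Wset)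
    (fh : (Fin n → ℝ) → EU → (Fin pd → ℝ) → Set (Fin n → ℝ))
    (hfh : ∀ xh uh wh, fh xh uh wh =
      {xhd ∈ Xh | ‖xhd - f xh (H xh + uh) wh‖ ≤ η / 2}) :
    -- `G` is a storage function from `Σ̂` to `Σ`:
    -- (a) lower bound
    (∀ x ∈ Xset, ∀ xh ∈ Xh, αlow ‖x - xh‖ ≤ G x xh) ∧
    -- (b) dissipation inequality with `u = H(x) + û`, `σ = κ̂`, `ρ_ext ≡ 0`,
    --     `W, Ŵ, H` identity matrices, and `ε = γ(η/2)`
    (∀ x ∈ Xset, ∀ xh ∈ Xh, ∀ uh ∈ Uh, ∀ w ∈ Wset, ∀ wh ∈ Wh,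
      ∀ xhd ∈ fh xh uh wh,
        G (f x (H x + uh) w) xhd - G x xh ≤
          -κh (G x xh) +
          (Sum.elim (w - wh) (h2 x - h2 xh)) ⬝ᵥ
            (Xbar *ᵥ Sum.elim (w - wh) (h2 x - h2 xh)) +
          γ (η / 2)) := by
  refine ⟨fun x hx xh hxh => h15 x hx xh (hXh hxh), ?_⟩
  intro x hx xh hxh uh huh w hw wh hwh xhd hxhd
  rw [hfh] at hxhd
  obtain ⟨hxhdX, hquant⟩ := hxhd
  -- Compare `xhd` with the unquantized successor `f xh (H xh + uh) wh`, which
  -- lies within `η / 2` of it; (16) controls `G` at that successor.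
  have hdiss := h16 x hx xh (hXh hxh) uh (hUh huh) w hw wh (hWh hwh)
  have htri := hTI (f x (H x + uh) w) (hf x hx _ w hw) xhd (hXh hxhdX)
    (f xh (H xh + uh) wh) (hf xh (hXh hxh) _ wh (hWh hwh))
  have hmono : γ ‖xhd - f xh (H xh + uh) wh‖ ≤ γ (η / 2) :=
    hγ.1.2.1.monotoneOn (norm_nonneg _) (Set.mem_Ici.2 (by positivity)) hquant
  linarith
end
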